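/- arXiv:0811.4230 — 2 statements merged into one kernel-verified Lean document; each statement's English description precedes it below -/
import Mathlib

section
/- Let (X,T) be a topological dynamical system with metric d and let K ⊆ X be a compact subset with h(T,K) > 0. Then for every real h with 0 < h < h(T,K) there is δ_0 > 0 such that for every δ with 0 < δ ≤ δ_0 there exists a countable compact subset K_{h,δ} ⊆ K with a unique limit point such that s(d,T,δ,K_{h,δ}) = h. -/
open Filter Set Metric MeasureTheory
open scoped ENNReal Topology

noncomputable section

variable {X Y : Type*}

def IsSep [PseudoMetricSpace X] (T : X → X) (n : ℕ) (ε : ℝ) (E : Set X) : Prop :=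
  E.Pairwise fun x y => ∃ i < n, ε < dist (T^[i] x) (T^[i] y)

def sepMaxCard [PseudoMetricSpace X] (T : X → X) (n : ℕ) (ε : ℝ) (K : Set X) : ℝ≥0∞ :=
  ⨆ (E : Finset X) (_ : ↑E ⊆ K ∧ IsSep T n ε (↑E : Set X)), (E.card : ℝ≥0∞)

def sepEnt [PseudoMetricSpace X] (T : X → X) (ε : ℝ) (K : Set X) : EReal :=
  Filter.atTop.limsup fun n : ℕ => ENNReal.log (sepMaxCard T n ε K) / (n : EReal)

def subEnt [PseudoMetricSpace X] (T : X → X) (K : Set X) : EReal :=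
  ⨆ (ε : ℝ) (_ : 0 < ε), sepEnt T ε K

/-- `(X,T)` is lowerable. -/
def Lowerable [PseudoMetricSpace X] (T : X → X) : Prop :=
  ∀ h : EReal, 0 ≤ h → h ≤ subEnt T (univ : Set X) →
    ∃ K : Set X, K.Nonempty ∧ IsCompact K ∧ subEnt T K = h

/-- `(X,T)` is hereditarily lowerable. -/
def HerLowerable [PseudoMetricSpace X] (T : X → X) : Prop :=
  ∀ K : Set X, K.Nonempty → IsCompact K → ∀ h : EReal, 0 ≤ h → h ≤ subEnt T K →
    ∃ K' : Set X, K' ⊆ K ∧ K'.Nonempty ∧ IsCompact K' ∧ subEnt T K' = h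

/-- `(X,T)` is hereditarily uniformly lowerable: the lowering subset can moreover be chosen
with at most one limit (accumulation) point. -/
def HUL [PseudoMetricSpace X] (T : X → X) : Prop :=
  ∀ K : Set X, K.Nonempty → IsCompact K → ∀ h : EReal, 0 ≤ h → h ≤ subEnt T K →
    ∃ K' : Set X, K' ⊆ K ∧ K'.Nonempty ∧ IsCompact K' ∧ subEnt T K' = h ∧
      {x | AccPt x (𝓟 K')}.Subsingleton

/-- `Φ_ε(x) = {y : d(T^n x, T^n y) ≤ ε for all n ≥ 0}`. -/
def Phi [PseudoMetricSpace X] (T : X → X) (ε : ℝ) (x : X) : Set X :=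
  {y | ∀ n : ℕ, dist (T^[n] x) (T^[n] y) ≤ ε}

/-- `h*_T(ε) = sup_x h(T, Φ_ε(x))`. -/
def hStar [PseudoMetricSpace X] (T : X → X) (ε : ℝ) : EReal :=
  ⨆ x : X, subEnt T (Phi T ε x)

/-- `(X,T)` is asymptotically `h`-expansive: `h*_T(ε) → 0` as `ε → 0+`. -/
def AsympHExpansive [PseudoMetricSpace X] (T : X → X) : Prop :=
  Tendsto (fun ε : ℝ => hStar T ε) (𝓝[>] 0) (𝓝 (0 : EReal))

/-- `T^n` for `n : ℤ`, for a homeomorphism `T`. -/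
def iterZ [TopologicalSpace X] (T : X ≃ₜ X) : ℤ → X → X
  | Int.ofNat n => (⇑T)^[n]
  | Int.negSucc n => (⇑T.symm)^[n + 1]

/-- `T` is expansive with expansive constant `δ`. -/
def ExpansiveWith [MetricSpace X] (T : X ≃ₜ X) (δ : ℝ) : Prop :=
  ∀ x y : X, x ≠ y → ∃ n : ℤ, δ < dist (iterZ T n x) (iterZ T n y)

/-- `K ⪰ 𝒲` : `K` is contained in some member of the family `𝒲`. -/
def Refines (K : Set X) (W : Finset (Set X)) : Prop := ∃ A ∈ W, K ⊆ A

/-- The join `U ∨ V` of two finite covers. -/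
def covJoin (U V : Finset (Set X)) : Finset (Set X) :=
  letI := Classical.decEq (Set X)
  (U ×ˢ V).image fun p => p.1 ∩ p.2

/-- `dynCov T U n = U_0^{n-1} = ⋁_{i=0}^{n-1} T^{-i} U` (with `U_0^{-1} = {univ}`). -/
def dynCov (T : X → X) (U : Finset (Set X)) : ℕ → Finset (Set X)
  | 0 => {(univ : Set X)}
  | n + 1 =>
      letI := Classical.decEq (Set X)
      covJoin (dynCov T U n) (U.image fun A => T^[n] ⁻¹' A)

/-- `n_{T,U}(K)`: `0` if `K ⋠ U`; `+∞` if `T^i K ⪰ U` for all `i`; otherwise the largest `j`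
with `T^i K ⪰ U` for all `0 ≤ i ≤ j-1`. -/
def nTU (T : X → X) (U : Finset (Set X)) (K : Set X) : ℕ∞ :=
  ⨆ (j : ℕ) (_ : ∀ i < j, Refines (T^[i] '' K) U), (j : ℕ∞)

/-- `e^{-λ n}` for `n : ℕ∞`, valued in `ℝ≥0∞` (with the conventions `e^{-λ·∞} = 0` for `λ > 0`,
`= 1` for `λ = 0` and `= ∞` for `λ < 0`). -/
def expWeight (lam : ℝ) (n : ℕ∞) : ℝ≥0∞ :=
  if n = ⊤ then (if 0 < lam then 0 else if lam = 0 then 1 else ⊤)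
  else ENNReal.ofReal (Real.exp (-(lam * (n.toNat : ℝ))))

/-- `m_{T,U}(K,λ,k)`: the infimum of `∑_{E ∈ 𝓔} e^{-λ n_{T,U}(E)}` over all countable families
`𝓔` of subsets of `X` with `∪𝓔 ⊇ K` and `E ⪰ U_0^{k-1}` for every `E ∈ 𝓔`. -/
def mTU (T : X → X) (U : Finset (Set X)) (K : Set X) (lam : ℝ) (k : ℕ) : ℝ≥0∞ :=
  ⨅ (ℰ : Set (Set X)) (_ : ℰ.Countable ∧ K ⊆ ⋃₀ ℰ ∧ ∀ E ∈ ℰ, Refines E (dynCov T U k)),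
    ∑' E : ℰ, expWeight lam (nTU T U (E : Set X))

/-- `m_{T,U}(K,λ) = lim_{k→∞} m_{T,U}(K,λ,k)`; since `m_{T,U}(K,λ,k)` is nondecreasing in `k`,
the limit is the supremum. -/
def mTUlim (T : X → X) (U : Finset (Set X)) (K : Set X) (lam : ℝ) : ℝ≥0∞ :=
  ⨆ k : ℕ, mTU T U K lam k

/-- `h^B_U(T,K) = inf {λ : m_{T,U}(K,λ) = 0}`. -/
def hBU (T : X → X) (U : Finset (Set X)) (K : Set X) : EReal :=
  ⨅ (lam : ℝ) (_ : mTUlim T U K lam = 0), (lam : EReal)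

/-- The dimensional entropy `h^B(T,K) = sup_U h^B_U(T,K)`, supremum over finite open covers. -/
def hB [TopologicalSpace X] (T : X → X) (K : Set X) : EReal :=
  ⨆ (U : Finset (Set X)) (_ : (∀ A ∈ U, IsOpen A) ∧ ⋃₀ (↑U : Set (Set X)) = univ),
    hBU T U K

/-- `N(U,K)`: the minimal cardinality of a subfamily of `U` covering `K` (`0` for `K = ∅`,
`∞` if no subfamily covers `K`). -/
def covCard (U : Finset (Set X)) (K : Set X) : ℝ≥0∞ :=
  ⨅ (V : Finset (Set X)) (_ : V ⊆ U ∧ K ⊆ ⋃₀ (↑V : Set (Set X))), (V.card : ℝ≥0∞)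

/-- `h_U(T,K) = limsup_{n→∞} (1/n) log N(U_0^{n-1},K)`. -/
def hCov (T : X → X) (U : Finset (Set X)) (K : Set X) : EReal :=
  Filter.atTop.limsup fun n : ℕ => ENNReal.log (covCard (dynCov T U n) K) / (n : EReal)

/-- Topological entropy of a subset via open covers: `h(T,K) = sup_U h_U(T,K)`. -/
def hCovSup [TopologicalSpace X] (T : X → X) (K : Set X) : EReal :=
  ⨆ (U : Finset (Set X)) (_ : (∀ A ∈ U, IsOpen A) ∧ ⋃₀ (↑U : Set (Set X)) = univ),
    hCov T U K

/-- The atom of the (finite) partition `P` containing `x`. -/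
def atomAt (P : Finset (Set X)) (x : X) : Set X := ⋃₀ {A | A ∈ P ∧ x ∈ A}

/-- `P` is a finite Borel partition. -/
def IsFinPartition [MeasurableSpace X] (P : Finset (Set X)) : Prop :=
  (∀ A ∈ P, MeasurableSet A) ∧ ⋃₀ (↑P : Set (Set X)) = univ ∧
    (↑P : Set (Set X)).Pairwise fun A B => Disjoint A B

/-- The Shannon entropy `H_μ(P) = ∑_{A ∈ P} -μ(A) log μ(A)` of a finite partition. -/
def partEnt [MeasurableSpace X] (μ : Measure X) (P : Finset (Set X)) : ℝ :=
  ∑ A ∈ P, -((μ A).toReal * Real.log (μ A).toReal)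

/-- The measure-theoretic (Kolmogorov–Sinai) entropy `h_μ(T)`: the supremum over finite Borel
partitions `P` of `lim_n (1/n) H_μ(P_0^{n-1})`; by subadditivity this limit is the infimum. -/
def ksEntropy [MeasurableSpace X] (T : X → X) (μ : Measure X) : EReal :=
  ⨆ (P : Finset (Set X)) (_ : IsFinPartition P),
    ⨅ n : ℕ, ((partEnt μ (dynCov T P (n + 1)) / (n + 1) : ℝ) : EReal)

/-- `π` is a principal factor map from `(X,T)` to `(Y,S)` : `h_μ(T) = h_{πμ}(S)` for every
`T`-invariant Borel probability measure `μ`. -/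
def IsPrincipal [MeasurableSpace X] [MeasurableSpace Y] (T : X → X) (S : Y → Y)
    (π : X → Y) : Prop :=
  ∀ μ : Measure X, IsProbabilityMeasure μ → Measure.map T μ = μ →
    ksEntropy T μ = ksEntropy S (Measure.map π μ)

/-- The relative topological entropy `h_top(T,X|π) = sup_{y ∈ Y} h(T, π^{-1}(y))`. -/
def relEnt [PseudoMetricSpace X] (T : X → X) (π : X → Y) : EReal :=
  ⨆ y : Y, subEnt T (π ⁻¹' {y})

/-- The canonical conversion `EReal → ℝ≥0∞` (`⊥` and negative reals go to `0`). -/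
def erealToENNReal (x : EReal) : ℝ≥0∞ := if x = ⊤ then ⊤ else ENNReal.ofReal x.toReal

/-!
Since the separated entropy at scale `δ` of a finite union is the maximum of those of its pieces,
compactness yields a point `x ∈ K` near which `K` has separated entropy above `h`, and deleting `x`
costs nothing. Inside the `j`-th member of a shrinking sequence of neighbourhoods of `x` choose a
finite block with more than `e^{hm}` points separated at some time `m ≥ j`, and prune it. As
removing one point lowers every separated cardinality by at most one, some subset still exceeds
`e^{hm}` at one time `m ≥ j`, but never by more than `1` from time `j` on. If the `j`-th
neighbourhood also lies in the Bowen ball of length `j` and radius `δ / 2` at `x`, then at time `n`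
all blocks of index at least `n` together count as one point, so `x` and all blocks have at most
`n (e^{hn} + 1) + 1` separated points, while the blocks exceed `e^{hm}` at infinitely many times.
-/

open ExpGrowth

section ExpGrowth

theorem frequently_exp_lt_of_lt_expGrowthSup {u : ℕ → ℝ≥0∞} {a : EReal}
    (ha : a < expGrowthSup u) : ∃ᶠ n : ℕ in atTop, EReal.exp (a * n) < u n := by
  refine ((frequently_lt_of_lt_limsup (by isBoundedDefault) ha).and_eventually
    (eventually_gt_atTop 0)).mono fun n ⟨hn, hn_pos⟩ => ?_
  rw [EReal.lt_div_iff (by exact_mod_cast hn_pos) (EReal.natCast_ne_top n)] at hn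
  rwa [← ENNReal.exp_log (u n), EReal.exp_lt_exp_iff]

theorem expGrowthSup_natCast : expGrowthSup (fun n : ℕ => (n : ℝ≥0∞)) = 0 := by
  have hlog : Tendsto (fun n : ℕ => Real.log n / n) atTop (𝓝 0) := by
    simpa [Function.comp_def] using
      (Real.tendsto_pow_log_div_mul_add_atTop 1 0 1 one_ne_zero).comp tendsto_natCast_atTop_atTop
  refine Tendsto.limsup_eq ((continuous_coe_real_ereal.tendsto' 0 0 rfl).comp hlog |>.congr' ?_)
  filter_upwards [eventually_gt_atTop 0] with n hn
  rw [← ENNReal.ofReal_natCast, ENNReal.log_ofReal_of_pos (by exact_mod_cast hn)]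
  exact EReal.coe_div _ _

theorem expGrowthSup_natCast_mul_le (u : ℕ → ℝ≥0∞) :
    expGrowthSup (fun n => n * u n) ≤ expGrowthSup u := by
  change expGrowthSup ((fun n : ℕ => (n : ℝ≥0∞)) * u) ≤ expGrowthSup u
  simpa [expGrowthSup_natCast] using
    expGrowthSup_mul_le (u := fun n => n) (v := u) (by simp [expGrowthSup_natCast])
      (by simp [expGrowthSup_natCast])

theorem expGrowthSup_add_one (u : ℕ → ℝ≥0∞) :
    expGrowthSup (fun n => u n + 1) = expGrowthSup u ⊔ 0 := by
  rw [← expGrowthSup_const one_ne_zero ENNReal.one_ne_top, ← expGrowthSup_add]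
  rfl

theorem expGrowthSup_natCast_mul_exp_add_one_add_one_le {h : EReal} (h0 : 0 ≤ h) :
    expGrowthSup (fun n : ℕ => n * (EReal.exp (h * n) + 1) + 1) ≤ h := by
  calc expGrowthSup (fun n : ℕ => n * (EReal.exp (h * n) + 1) + 1)
      = expGrowthSup (fun n : ℕ => n * (EReal.exp (h * n) + 1)) ⊔ 0 := expGrowthSup_add_one _
    _ ≤ expGrowthSup (fun n : ℕ => EReal.exp (h * n) + 1) ⊔ 0 := by
        gcongr
        exact expGrowthSup_natCast_mul_le _
    _ = h := by rw [expGrowthSup_add_one, expGrowthSup_exp, sup_eq_left.2 h0, sup_eq_left.2 h0]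

end ExpGrowth

section Topology

theorem finite_iUnion_diff_of_tendsto_smallSets {ι : Type*} {l : Filter X} {s : ι → Set X}
    (hs : ∀ i, (s i).Finite) (hl : Tendsto s cofinite l.smallSets) {U : Set X} (hU : U ∈ l) :
    ((⋃ i, s i) \ U).Finite := by
  have hfin : {i | ¬ s i ⊆ U}.Finite := tendsto_smallSets_iff.1 hl U hU
  refine (hfin.biUnion fun i _ => hs i).subset fun y ⟨hy, hyU⟩ => ?_
  obtain ⟨i, hi⟩ := mem_iUnion.1 hy
  exact mem_biUnion (fun hsub => hyU (hsub hi)) hi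

variable [TopologicalSpace X] {x : X} {A : Set X}

theorem accPt_iUnion_of_tendsto_smallSets {ι : Type*} {l : Filter ι} [l.NeBot] {s : ι → Set X}
    (hne : ∀ i, (s i).Nonempty) (hx : ∀ i, x ∉ s i) (hs : Tendsto s l (𝓝 x).smallSets) :
    AccPt x (𝓟 (⋃ i, s i)) := by
  rw [accPt_iff_nhds]
  intro U hU
  obtain ⟨i, hi⟩ := (tendsto_smallSets_iff.1 hs U hU).exists
  obtain ⟨y, hy⟩ := hne i
  exact ⟨y, ⟨hi hy, mem_iUnion_of_mem i hy⟩, ne_of_mem_of_not_mem hy (hx i)⟩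

theorem isCompact_of_finite_diff_nhds (hx : x ∈ A) (hA : ∀ U ∈ 𝓝 x, (A \ U).Finite) :
    IsCompact A := by
  have htendsto : Tendsto ((↑) : A → X) cofinite (𝓝 x) := fun U hU =>
    ((hA U hU).preimage Subtype.val_injective.injOn).subset fun y hy => ⟨y.2, hy⟩
  simpa [insert_eq_of_mem hx] using htendsto.isCompact_insert_range_of_cofinite

theorem derivedSet_eq_singleton_of_finite_diff_nhds [T2Space X] (hx : AccPt x (𝓟 A))
    (hA : ∀ U ∈ 𝓝 x, (A \ U).Finite) : derivedSet A = {x} := by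
  refine Subset.antisymm (fun y hy => ?_) (singleton_subset_iff.2 hx)
  by_contra hne
  obtain ⟨V, U, hV, hU, hVU⟩ := t2_separation_nhds hne
  have hfin : (V ∩ A).Finite :=
    (hA U hU).subset fun z ⟨hzV, hzA⟩ => ⟨hzA, disjoint_left.1 hVU hzV⟩
  exact Infinite.of_accPt (AccPt.nhds_inter hy hV) hfin

end Topology

section SeparatedCardinality

variable [PseudoMetricSpace X] {T : X → X} {n : ℕ} {ε : ℝ} {A B : Set X}

theorem card_le_sepMaxCard {E : Finset X} (hE : (E : Set X) ⊆ A) (hsep : IsSep T n ε (E : Set X)) :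
    (E.card : ℝ≥0∞) ≤ sepMaxCard T n ε A :=
  le_iSup₂_of_le E ⟨hE, hsep⟩ le_rfl

theorem sepMaxCard_mono (hAB : A ⊆ B) : sepMaxCard T n ε A ≤ sepMaxCard T n ε B :=
  iSup₂_le fun _ hE => card_le_sepMaxCard (hE.1.trans hAB) hE.2

theorem sepMaxCard_anti {ε' : ℝ} (hε : ε ≤ ε') : sepMaxCard T n ε' A ≤ sepMaxCard T n ε A :=
  iSup₂_le fun _ hE => card_le_sepMaxCard hE.1 <|
    hE.2.mono' fun _ _ ⟨i, hi, hdist⟩ => ⟨i, hi, hε.trans_lt hdist⟩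

theorem sepMaxCard_le_encard : sepMaxCard T n ε A ≤ A.encard := by
  refine iSup₂_le fun E hE => ?_
  exact_mod_cast (encard_coe_eq_coe_finsetCard E).symm.le.trans (encard_le_encard hE.1)

theorem sepMaxCard_union_le :
    sepMaxCard T n ε (A ∪ B) ≤ sepMaxCard T n ε A + sepMaxCard T n ε B := by
  classical
  refine iSup₂_le fun E ⟨hE, hsep⟩ => ?_
  have hsep_filter (p : X → Prop) [DecidablePred p] :
      IsSep T n ε (E.filter p : Set X) :=
    hsep.mono (Finset.coe_subset.2 (Finset.filter_subset p E))
  rw [← E.card_filter_add_card_filter_not (p := (· ∈ A)), Nat.cast_add]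
  gcongr
  · exact card_le_sepMaxCard (fun x hx => (Finset.mem_filter.1 hx).2) (hsep_filter _)
  · refine card_le_sepMaxCard (fun x hx => ?_) (hsep_filter _)
    obtain ⟨hxE, hxA⟩ := Finset.mem_filter.1 hx
    exact (hE hxE).resolve_left hxA

theorem sepMaxCard_insert_le (x : X) :
    sepMaxCard T n ε (insert x A) ≤ sepMaxCard T n ε A + 1 := by
  rw [← union_singleton]
  refine sepMaxCard_union_le.trans ?_
  gcongr
  simpa using sepMaxCard_le_encard (A := {x})

theorem sepMaxCard_biUnion_le {ι : Type*} (s : Finset ι) (F : ι → Set X) :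
    sepMaxCard T n ε (⋃ i ∈ s, F i) ≤ ∑ i ∈ s, sepMaxCard T n ε (F i) := by
  classical
  induction s using Finset.induction_on with
  | empty => simpa using sepMaxCard_le_encard (A := (∅ : Set X))
  | insert i s hi ih =>
    rw [Finset.set_biUnion_insert, Finset.sum_insert hi]
    exact sepMaxCard_union_le.trans (by gcongr)

/-- The open Bowen ball `{y | d_n(x, y) < r}`, which meets every `(n, 2r)`-separated set in at most
one point; for `n = 0` it is the whole space. -/
def bowenBall (T : X → X) (n : ℕ) (r : ℝ) (x : X) : Set X :=
  {y | ∀ i < n, dist (T^[i] x) (T^[i] y) < r}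

theorem mem_bowenBall_self {r : ℝ} (hr : 0 < r) (x : X) : x ∈ bowenBall T n r x := fun i _ => by
  rwa [dist_self]

theorem bowenBall_anti {m : ℕ} (hmn : m ≤ n) (r : ℝ) (x : X) :
    bowenBall T n r x ⊆ bowenBall T m r x :=
  fun _ hy i hi => hy i (hi.trans_le hmn)

theorem bowenBall_mem_nhds (hT : Continuous T) (n : ℕ) {r : ℝ} (hr : 0 < r) (x : X) :
    bowenBall T n r x ∈ 𝓝 x := by
  filter_upwards [Dynamics.ball_dynEntourage_mem_nhds hT (dist_mem_uniformity hr) n x] with y hy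
  exact Dynamics.mem_dynEntourage.1 hy

theorem sepMaxCard_bowenBall_le_one (x : X) :
    sepMaxCard T n ε (bowenBall T n (ε / 2) x) ≤ 1 := by
  refine iSup₂_le fun E ⟨hE, hsep⟩ => ?_
  suffices E.card ≤ 1 by exact_mod_cast this
  refine Finset.card_le_one.2 fun y hy z hz => by_contra fun hyz => ?_
  obtain ⟨i, hi, hdist⟩ := hsep hy hz hyz
  have hxy := hE hy i hi
  have hxz := hE hz i hi
  linarith [dist_triangle_left (T^[i] y) (T^[i] z) (T^[i] x)]

end SeparatedCardinality

section SeparatedEntropy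

variable [PseudoMetricSpace X] {T : X → X} {ε : ℝ} {A B : Set X} {h : EReal}

theorem sepEnt_eq_expGrowthSup (T : X → X) (ε : ℝ) (A : Set X) :
    sepEnt T ε A = expGrowthSup fun n => sepMaxCard T n ε A := rfl

theorem sepEnt_mono (hAB : A ⊆ B) : sepEnt T ε A ≤ sepEnt T ε B :=
  expGrowthSup_monotone fun _ => sepMaxCard_mono hAB

theorem sepEnt_anti {ε' : ℝ} (hε : ε ≤ ε') : sepEnt T ε' A ≤ sepEnt T ε A :=
  expGrowthSup_monotone fun _ => sepMaxCard_anti hε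

theorem sepEnt_union_le : sepEnt T ε (A ∪ B) ≤ sepEnt T ε A ⊔ sepEnt T ε B := by
  simp only [sepEnt_eq_expGrowthSup]
  rw [← expGrowthSup_add]
  exact expGrowthSup_monotone fun _ => sepMaxCard_union_le

theorem sepEnt_empty : sepEnt T ε (∅ : Set X) = ⊥ := by
  have hcard (n : ℕ) : sepMaxCard T n ε (∅ : Set X) = 0 := by
    simpa using sepMaxCard_le_encard (T := T) (n := n) (ε := ε) (A := (∅ : Set X))
  simp only [sepEnt_eq_expGrowthSup, hcard]
  exact expGrowthSup_zero

theorem sepEnt_singleton_le (x : X) : sepEnt T ε {x} ≤ 0 := by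
  rw [sepEnt_eq_expGrowthSup, ← expGrowthSup_const one_ne_zero ENNReal.one_ne_top]
  refine expGrowthSup_monotone fun n => ?_
  simpa using sepMaxCard_le_encard (T := T) (n := n) (ε := ε) (A := {x})

theorem lt_sepEnt_diff_singleton (h0 : 0 ≤ h) (hlt : h < sepEnt T ε A) (x : X) :
    h < sepEnt T ε (A \ {x}) := by
  have hle : sepEnt T ε A ≤ sepEnt T ε (A \ {x}) ⊔ sepEnt T ε {x} :=
    (sepEnt_mono (subset_sdiff_union A {x})).trans sepEnt_union_le
  exact (lt_sup_iff.1 (hlt.trans_le hle)).resolve_right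
    ((sepEnt_singleton_le x).trans h0).not_gt

theorem exists_forall_mem_nhdsWithin_lt_sepEnt {K : Set X} (hK : IsCompact K)
    (hlt : h < sepEnt T ε K) : ∃ x ∈ K, ∀ U ∈ 𝓝[K] x, h < sepEnt T ε U := by
  by_contra! hcon
  refine hlt.not_ge (hK.induction_on (p := fun A => sepEnt T ε A ≤ h) ?_ ?_ ?_ hcon)
  · simp only [sepEnt_empty, bot_le]
  · exact fun A B hAB hB => (sepEnt_mono hAB).trans hB
  · exact fun A B hA hB => sepEnt_union_le.trans (sup_le hA hB)

end SeparatedEntropy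

section SepBlock

variable [PseudoMetricSpace X] {T : X → X} {ε : ℝ} {h : EReal}

/-- The finite set `E` carries the growth rate `h` from time `j` on, and only just: its separated
cardinality exceeds `e^{hm}` at some time `m ≥ j`, but by at most `1` at every such time. -/
structure IsSepBlock (T : X → X) (ε : ℝ) (h : EReal) (j : ℕ) (E : Finset X) : Prop where
  exists_exp_lt : ∃ m ≥ j, EReal.exp (h * m) < sepMaxCard T m ε (E : Set X)
  le_exp_add_one : ∀ m ≥ j, sepMaxCard T m ε (E : Set X) ≤ EReal.exp (h * m) + 1

theorem IsSepBlock.nonempty {j : ℕ} {E : Finset X} (hE : IsSepBlock T ε h j E) :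
    E.Nonempty := by
  obtain ⟨m, -, hm⟩ := hE.exists_exp_lt
  rw [Finset.nonempty_iff_ne_empty]
  rintro rfl
  exact (hm.trans_le sepMaxCard_le_encard).not_ge (by simp)

theorem exists_subset_isSepBlock {j : ℕ} {E : Finset X}
    (hE : ∃ m ≥ j, EReal.exp (h * m) < sepMaxCard T m ε (E : Set X)) :
    ∃ F ⊆ E, IsSepBlock T ε h j F := by
  classical
  induction E using Finset.induction_on with
  | empty =>
    obtain ⟨m, -, hm⟩ := hE
    exact absurd (hm.trans_le sepMaxCard_le_encard) (by simp)
  | insert a E _ ih =>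
    by_cases hsmall : ∃ m ≥ j, EReal.exp (h * m) < sepMaxCard T m ε (E : Set X)
    · obtain ⟨F, hFE, hF⟩ := ih hsmall
      exact ⟨F, hFE.trans (Finset.subset_insert a E), hF⟩
    · push Not at hsmall
      refine ⟨insert a E, Subset.rfl, hE, fun m hm => ?_⟩
      rw [Finset.coe_insert]
      exact (sepMaxCard_insert_le a).trans (by gcongr; exact hsmall m hm)

theorem exists_isSepBlock_subset {A : Set X} (hlt : h < sepEnt T ε A) (j : ℕ) :
    ∃ F : Finset X, (F : Set X) ⊆ A ∧ IsSepBlock T ε h j F := by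
  obtain ⟨m, hm, hlt_card⟩ := frequently_atTop.1 (frequently_exp_lt_of_lt_expGrowthSup hlt) j
  simp only [sepMaxCard, lt_iSup_iff] at hlt_card
  obtain ⟨E, ⟨hEA, hsep⟩, hE⟩ := hlt_card
  obtain ⟨F, hFE, hF⟩ :=
    exists_subset_isSepBlock ⟨m, hm, hE.trans_le (card_le_sepMaxCard Subset.rfl hsep)⟩
  exact ⟨F, (Finset.coe_subset.2 hFE).trans hEA, hF⟩

variable {x : X} {F : ℕ → Finset X}

theorem le_sepEnt_iUnion_of_isSepBlock (hF : ∀ j, IsSepBlock T ε h j (F j)) :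
    h ≤ sepEnt T ε (⋃ j, (F j : Set X)) := by
  refine Frequently.le_expGrowthSup (frequently_atTop.2 fun j => ?_)
  obtain ⟨m, hm, hlt⟩ := (hF j).exists_exp_lt
  exact ⟨m, hm, hlt.le.trans (sepMaxCard_mono (subset_iUnion_of_subset j Subset.rfl))⟩

theorem sepMaxCard_insert_iUnion_le_of_isSepBlock (hε : 0 < ε)
    (hF : ∀ j, IsSepBlock T ε h j (F j))
    (hball : ∀ j, (F j : Set X) ⊆ bowenBall T j (ε / 2) x) (n : ℕ) :
    sepMaxCard T n ε (insert x (⋃ j, (F j : Set X))) ≤ n * (EReal.exp (h * n) + 1) + 1 := by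
  have hcover : insert x (⋃ j, (F j : Set X)) ⊆
      (⋃ j ∈ Finset.range n, (F j : Set X)) ∪ bowenBall T n (ε / 2) x := by
    refine insert_subset (Or.inr (mem_bowenBall_self (half_pos hε) x)) (iUnion_subset fun j => ?_)
    obtain hjn | hnj := lt_or_ge j n
    · exact fun y hy => Or.inl (mem_biUnion (Finset.mem_range.2 hjn) hy)
    · exact subset_union_of_subset_right ((hball j).trans (bowenBall_anti hnj _ x)) _
  calc sepMaxCard T n ε (insert x (⋃ j, (F j : Set X)))
      ≤ sepMaxCard T n ε (⋃ j ∈ Finset.range n, (F j : Set X)) +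
          sepMaxCard T n ε (bowenBall T n (ε / 2) x) :=
        (sepMaxCard_mono hcover).trans sepMaxCard_union_le
    _ ≤ ∑ j ∈ Finset.range n, sepMaxCard T n ε (F j : Set X) + 1 :=
        add_le_add (sepMaxCard_biUnion_le _ _) (sepMaxCard_bowenBall_le_one x)
    _ ≤ ∑ _j ∈ Finset.range n, (EReal.exp (h * n) + 1) + 1 := by
        gcongr with j hj
        exact (hF j).le_exp_add_one n (Finset.mem_range.1 hj).le
    _ = n * (EReal.exp (h * n) + 1) + 1 := by
        rw [Finset.sum_const, Finset.card_range, nsmul_eq_mul]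

theorem sepEnt_insert_iUnion_of_isSepBlock (hε : 0 < ε) (h0 : 0 ≤ h)
    (hF : ∀ j, IsSepBlock T ε h j (F j))
    (hball : ∀ j, (F j : Set X) ⊆ bowenBall T j (ε / 2) x) :
    sepEnt T ε (insert x (⋃ j, (F j : Set X))) = h :=
  le_antisymm
    ((expGrowthSup_monotone (sepMaxCard_insert_iUnion_le_of_isSepBlock hε hF hball)).trans
      (expGrowthSup_natCast_mul_exp_add_one_add_one_le h0))
    ((le_sepEnt_iUnion_of_isSepBlock hF).trans (sepEnt_mono (subset_insert _ _)))

theorem exists_isSepBlock_seq_tendsto_smallSets (hT : Continuous T) (hε : 0 < ε) (h0 : 0 ≤ h)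
    {K : Set X} (hlt : ∀ U ∈ 𝓝[K] x, h < sepEnt T ε U) :
    ∃ F : ℕ → Finset X, (∀ j, IsSepBlock T ε h j (F j)) ∧
      (∀ j, (F j : Set X) ⊆ K) ∧ (∀ j, x ∉ (F j : Set X)) ∧
      (∀ j, (F j : Set X) ⊆ bowenBall T j (ε / 2) x) ∧
      Tendsto (fun j => (F j : Set X)) atTop (𝓝 x).smallSets := by
  obtain ⟨V, hV⟩ := (𝓝 x).exists_antitone_basis
  have hlt_punctured (j : ℕ) : h < sepEnt T ε ((K ∩ (V j ∩ bowenBall T j (ε / 2) x)) \ {x}) :=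
    lt_sepEnt_diff_singleton h0 (hlt _ <| inter_mem self_mem_nhdsWithin <|
      mem_nhdsWithin_of_mem_nhds <|
        inter_mem (hV.mem j) (bowenBall_mem_nhds hT j (half_pos hε) x)) x
  choose F hFsub hF using fun j => exists_isSepBlock_subset (hlt_punctured j) j
  refine ⟨F, hF, fun j y hy => (hFsub j hy).1.1, fun j hx => (hFsub j hx).2 rfl,
    fun j y hy => (hFsub j hy).1.2.2, tendsto_smallSets_iff.2 fun U hU => ?_⟩
  filter_upwards [hV.eventually_subset hU] with j hj
  exact fun y hy => hj (hFsub j hy).1.2.1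

end SepBlock

theorem exists_sepEnt_eq_of_lt_sepEnt [MetricSpace X] {T : X → X} (hT : Continuous T)
    {K : Set X} (hK : IsCompact K) {δ : ℝ} (hδ : 0 < δ) {h : EReal} (h0 : 0 ≤ h)
    (hlt : h < sepEnt T δ K) :
    ∃ A ⊆ K, A.Countable ∧ IsCompact A ∧ (∃ x : X, derivedSet A = {x}) ∧ sepEnt T δ A = h := by
  obtain ⟨x, hxK, hx⟩ := exists_forall_mem_nhdsWithin_lt_sepEnt hK hlt
  obtain ⟨F, hF, hFK, hxF, hball, hFx⟩ := exists_isSepBlock_seq_tendsto_smallSets hT hδ h0 hx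
  have hfin (U : Set X) (hU : U ∈ 𝓝 x) : (insert x (⋃ j, (F j : Set X)) \ U).Finite := by
    rw [insert_sdiff_of_mem _ (mem_of_mem_nhds hU)]
    exact finite_iUnion_diff_of_tendsto_smallSets (fun j => (F j).finite_toSet)
      (Nat.cofinite_eq_atTop ▸ hFx) hU
  have hacc : AccPt x (𝓟 (⋃ j, (F j : Set X))) :=
    accPt_iUnion_of_tendsto_smallSets (fun j => (hF j).nonempty) hxF hFx
  exact ⟨insert x (⋃ j, (F j : Set X)), insert_subset hxK (iUnion_subset hFK),
    (countable_iUnion fun j => (F j).countable_toSet).insert x,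
    isCompact_of_finite_diff_nhds (mem_insert _ _) hfin,
    ⟨x, derivedSet_eq_singleton_of_finite_diff_nhds
      (hacc.mono (principal_mono.2 (subset_insert _ _))) hfin⟩,
    sepEnt_insert_iUnion_of_isSepBlock hδ h0 hF hball⟩

theorem exists_separated_entropy_subset_general [MetricSpace X] {T : X → X} (hT : Continuous T)
    {K : Set X} (hK : IsCompact K) {h : EReal} (h0 : 0 ≤ h) (hlt : h < subEnt T K) :
    ∃ δ₀ : ℝ, 0 < δ₀ ∧ ∀ δ : ℝ, 0 < δ → δ ≤ δ₀ →
      ∃ A ⊆ K, A.Countable ∧ IsCompact A ∧ (∃ x : X, derivedSet A = {x}) ∧ sepEnt T δ A = h := by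
  simp only [subEnt, lt_iSup_iff] at hlt
  obtain ⟨δ₀, hδ₀, hlt⟩ := hlt
  exact ⟨δ₀, hδ₀, fun δ hδ hle =>
    exists_sepEnt_eq_of_lt_sepEnt hT hK hδ h0 (hlt.trans_le (sepEnt_anti hle))⟩

/-- If `K` is compact with `h(T,K) > 0` then for every `0 < h < h(T,K)`
there is `δ₀ > 0` such that for all `0 < δ ≤ δ₀` there is a countable compact subset
`K_{h,δ} ⊆ K` with a unique limit point satisfying `s(d,T,δ,K_{h,δ}) = h`. -/
theorem exists_separated_entropy_subset {X : Type*} [MetricSpace X] [CompactSpace X]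
    (T : X ≃ₜ X) (K : Set X) (hK : IsCompact K) (hpos : 0 < subEnt (⇑T) K)
    (h : ℝ) (h0 : 0 < h) (hlt : (h : EReal) < subEnt (⇑T) K) :
    ∃ δ₀ : ℝ, 0 < δ₀ ∧ ∀ δ : ℝ, 0 < δ → δ ≤ δ₀ →
      ∃ Khδ : Set X, Khδ ⊆ K ∧ Khδ.Countable ∧ IsCompact Khδ ∧
        (∃ x₀ : X, {y | AccPt y (𝓟 Khδ)} = {x₀}) ∧
        sepEnt (⇑T) δ Khδ = (h : EReal) :=
  exists_separated_entropy_subset_general T.continuous hK (EReal.coe_nonneg.2 h0.le) hlt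
end
end

section
/- Let (X,T) be a general topological dynamical system, U a finite Borel cover of X, K ⊆ X and m ∈ ℕ. Then h^B_{U_0^{m−1}}(T^m, K) = m · h^B_U(T, K); consequently h^B(T^m, K) = m · h^B(T, K). -/
open Filter Set Metric MeasureTheory
open scoped ENNReal Topology

noncomputable section

variable {X Y : Type*}

/-!
The quantity `n_{T,U}(E)` is governed by the adjunction `j ≤ n_{T,U}(E) ↔ E ⪰ U_0^{j-1}`. Since
the `T^m`-join of `U_0^{m-1}` over `k` steps is refined by the same sets as `U_0^{mk-1}`, the
quantity `n'` attached to `(T^m, U_0^{m-1})` is the integer part of `n/m`, where `n = n_{T,U}(E)`.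
Hence the weights `e^{-mλn'}` and `e^{-λn}` differ by a factor of at most `e^{|λ|m}`, uniformly in
`E`, so the critical exponents of the two outer measures differ exactly by the factor `m`. For
`h^B`, one uses in addition that `U_0^{m-1}` is an open cover refining `U`.
-/

section GaloisConnection

variable {a : EReal}

theorem galoisConnection_ereal_div_mul (ha : 0 < a) (ha' : a ≠ ⊤) :
    GaloisConnection (fun x : EReal => x / a) (fun x => a * x) :=
  fun _ _ => EReal.div_le_iff_le_mul ha ha'

theorem galoisConnection_ereal_mul_div (ha : 0 < a) (ha' : a ≠ ⊤) :
    GaloisConnection (fun x : EReal => a * x) (fun x => x / a) :=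
  fun x y => by rw [EReal.le_div_iff_mul_le ha ha', mul_comm]

end GaloisConnection

section Covers

variable {X : Type*} {T : X → X} {U V : Finset (Set X)} {E : Set X} {m k : ℕ}

theorem Refines.trans (hE : Refines E U) (hUV : ∀ A ∈ U, Refines A V) : Refines E V := by
  obtain ⟨A, hA, hEA⟩ := hE
  obtain ⟨B, hB, hAB⟩ := hUV A hA
  exact ⟨B, hB, hEA.trans hAB⟩

theorem refines_covJoin_iff : Refines E (covJoin U V) ↔ Refines E U ∧ Refines E V := by
  simp only [Refines, covJoin, Finset.mem_image, Finset.mem_product, Prod.exists]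
  constructor
  · rintro ⟨_, ⟨A, B, ⟨hA, hB⟩, rfl⟩, hE⟩
    exact ⟨⟨A, hA, hE.trans inter_subset_left⟩, ⟨B, hB, hE.trans inter_subset_right⟩⟩
  · rintro ⟨⟨A, hA, hEA⟩, ⟨B, hB, hEB⟩⟩
    exact ⟨A ∩ B, ⟨A, B, ⟨hA, hB⟩, rfl⟩, subset_inter hEA hEB⟩

theorem refines_image_preimage_iff {Y : Type*} [DecidableEq (Set X)] {f : X → Y}
    {W : Finset (Set Y)} : Refines E (W.image fun A => f ⁻¹' A) ↔ Refines (f '' E) W := by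
  simp only [Refines, Finset.exists_mem_image, image_subset_iff]

theorem refines_dynCov_zero : Refines E (dynCov T U 0) :=
  ⟨univ, Finset.mem_singleton_self _, subset_univ E⟩

theorem refines_dynCov_succ_iff :
    Refines E (dynCov T U (k + 1)) ↔ Refines E (dynCov T U k) ∧ Refines (T^[k] '' E) U := by
  rw [dynCov, refines_covJoin_iff]
  exact and_congr_right' refines_image_preimage_iff

theorem refines_dynCov_iff : Refines E (dynCov T U k) ↔ ∀ i < k, Refines (T^[i] '' E) U := by
  induction k with
  | zero => simp only [refines_dynCov_zero, Nat.not_lt_zero, IsEmpty.forall_iff, implies_true]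
  | succ k ih => rw [refines_dynCov_succ_iff, ih, Nat.forall_lt_succ_right]

theorem refines_dynCov_of_le {j : ℕ} (hjk : j ≤ k) (hE : Refines E (dynCov T U k)) :
    Refines E (dynCov T U j) :=
  refines_dynCov_iff.2 fun i hi => refines_dynCov_iff.1 hE i (hi.trans_le hjk)

theorem refines_dynCov_mono (hUV : ∀ A ∈ U, Refines A V) (hE : Refines E (dynCov T U k)) :
    Refines E (dynCov T V k) :=
  refines_dynCov_iff.2 fun i hi => (refines_dynCov_iff.1 hE i hi).trans hUV

theorem refines_dynCov_add_iff :
    Refines E (dynCov T U (m + k)) ↔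
      Refines E (dynCov T U m) ∧ Refines (T^[m] '' E) (dynCov T U k) := by
  induction k with
  | zero => simp only [add_zero, refines_dynCov_zero, and_true]
  | succ k ih =>
    rw [← add_assoc, refines_dynCov_succ_iff, ih, refines_dynCov_succ_iff, and_assoc,
      ← image_comp, ← Function.iterate_add, add_comm m k]

theorem refines_dynCov_iterate_iff :
    Refines E (dynCov T^[m] (dynCov T U m) k) ↔ Refines E (dynCov T U (m * k)) := by
  induction k with
  | zero => simp only [mul_zero, refines_dynCov_zero]
  | succ k ih =>
    rw [refines_dynCov_succ_iff, ih, mul_add_one, refines_dynCov_add_iff, Function.iterate_mul]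

theorem refines_of_mem_dynCov (hm : 0 < m) {A : Set X} (hA : A ∈ dynCov T U m) :
    Refines A U := by
  have hA₀ : Refines (T^[0] '' A) U := refines_dynCov_iff.1 ⟨A, hA, Subset.rfl⟩ 0 hm
  rwa [Function.iterate_zero, image_id] at hA₀

theorem isOpen_of_mem_dynCov [TopologicalSpace X] (hT : Continuous T) (hU : ∀ A ∈ U, IsOpen A) :
    ∀ A ∈ dynCov T U k, IsOpen A := by
  induction k with
  | zero => simp only [dynCov, Finset.mem_singleton, forall_eq, isOpen_univ]
  | succ k ih =>
    simp only [dynCov, covJoin, Finset.mem_image, Finset.mem_product]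
    rintro _ ⟨⟨B, _⟩, ⟨hB, A, hA, rfl⟩, rfl⟩
    exact (ih B hB).inter ((hU A hA).preimage (hT.iterate k))

theorem sUnion_dynCov_eq_univ (hU : ⋃₀ (↑U : Set (Set X)) = univ) :
    ⋃₀ (↑(dynCov T U k) : Set (Set X)) = univ := by
  refine sUnion_eq_univ_iff.2 fun x => ?_
  have hx : Refines {x} (dynCov T U k) := refines_dynCov_iff.2 fun i _ => by
    obtain ⟨A, hA, hxA⟩ := sUnion_eq_univ_iff.1 hU (T^[i] x)
    exact ⟨A, hA, by rwa [image_singleton, singleton_subset_iff]⟩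
  obtain ⟨A, hA, hxA⟩ := hx
  exact ⟨A, hA, singleton_subset_iff.1 hxA⟩

theorem natCast_le_nTU_iff {j : ℕ} : (j : ℕ∞) ≤ nTU T U E ↔ Refines E (dynCov T U j) := by
  refine ⟨fun hj => ?_, fun hE => le_iSup₂_of_le j (refines_dynCov_iff.1 hE) le_rfl⟩
  by_contra hE
  cases j with
  | zero => exact hE refines_dynCov_zero
  | succ j =>
    have h_bound : nTU T U E ≤ j := iSup₂_le fun i hi => by
      by_contra! hji
      exact hE (refines_dynCov_of_le (Order.add_one_le_of_lt (Nat.cast_lt.1 hji))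
        (refines_dynCov_iff.2 hi))
    exact (Nat.lt_succ_self j).not_ge (Nat.cast_le.1 (hj.trans h_bound))

theorem nTU_mono (hUV : ∀ A ∈ U, Refines A V) : nTU T U E ≤ nTU T V E :=
  ENat.forall_natCast_le_iff_le.1 fun _ hj =>
    natCast_le_nTU_iff.2 (refines_dynCov_mono hUV (natCast_le_nTU_iff.1 hj))

theorem natCast_le_nTU_iterate_iff {j : ℕ} :
    (j : ℕ∞) ≤ nTU T^[m] (dynCov T U m) E ↔ ((m * j : ℕ) : ℕ∞) ≤ nTU T U E := by
  rw [natCast_le_nTU_iff, natCast_le_nTU_iff, refines_dynCov_iterate_iff]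

theorem mul_nTU_iterate_le : m * nTU T^[m] (dynCov T U m) E ≤ nTU T U E := by
  conv_lhs => rw [nTU]
  simp only [ENat.mul_iSup]
  refine iSup₂_le fun j hj => ?_
  have hj' : (j : ℕ∞) ≤ nTU T^[m] (dynCov T U m) E := le_iSup₂_of_le j hj le_rfl
  exact_mod_cast natCast_le_nTU_iterate_iff.1 hj'

theorem nTU_le_mul_nTU_iterate_add (hm : 0 < m) :
    nTU T U E ≤ m * nTU T^[m] (dynCov T U m) E + m := by
  refine ENat.forall_natCast_le_iff_le.1 fun j hj => ?_
  have hdiv : ((j / m : ℕ) : ℕ∞) ≤ nTU T^[m] (dynCov T U m) E :=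
    natCast_le_nTU_iterate_iff.2 ((Nat.cast_le.2 (Nat.mul_div_le j m)).trans hj)
  calc (j : ℕ∞) ≤ ((m * (j / m) + m : ℕ) : ℕ∞) := by
        exact_mod_cast (Nat.lt_mul_div_succ j hm).le
    _ = m * ((j / m : ℕ) : ℕ∞) + m := by push_cast; rfl
    _ ≤ m * nTU T^[m] (dynCov T U m) E + m := by gcongr

end Covers

section ExpWeight

variable {l : ℝ} {m : ℕ} {a b : ℕ∞}

theorem expWeight_natCast (l : ℝ) (n : ℕ) :
    expWeight l n = ENNReal.ofReal (Real.exp (-(l * n))) := by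
  simp only [expWeight, ENat.natCast_ne_top, if_false, ENat.toNat_natCast]

theorem expWeight_natCast_mul (hm : 0 < m) (l : ℝ) (a : ℕ∞) :
    expWeight (m * l) a = expWeight l (m * a) := by
  cases a with
  | top => simp [expWeight, ENat.mul_top, hm, hm.ne']
  | coe n =>
    rw [← Nat.cast_mul, expWeight_natCast, expWeight_natCast, Nat.cast_mul]
    ring_nf

theorem expWeight_anti (hl : 0 ≤ l) (hab : a ≤ b) : expWeight l b ≤ expWeight l a := by
  cases b with
  | top =>
    rcases hl.eq_or_lt with rfl | hl
    · simp [expWeight]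
    · simp [expWeight, hl]
  | coe n =>
    lift a to ℕ using ne_top_of_le_ne_top (ENat.natCast_ne_top n) hab
    rw [expWeight_natCast, expWeight_natCast]
    gcongr
    exact_mod_cast hab

theorem one_le_expWeight (hl : l ≤ 0) (a : ℕ∞) : 1 ≤ expWeight l a := by
  cases a with
  | top =>
    rcases hl.eq_or_lt with rfl | hl'
    · simp [expWeight]
    · simp [expWeight, hl.not_gt, hl'.ne]
  | coe n =>
    rw [expWeight_natCast, ENNReal.one_le_ofReal, Real.one_le_exp_iff, neg_nonneg]
    exact mul_nonpos_of_nonpos_of_nonneg hl n.cast_nonneg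

theorem expWeight_le_mul_of_le_add (hab : a ≤ b + m) (hba : b ≤ a + m) :
    expWeight l a ≤ ENNReal.ofReal (Real.exp (|l| * m)) * expWeight l b := by
  have hC : 1 ≤ ENNReal.ofReal (Real.exp (|l| * m)) :=
    ENNReal.one_le_ofReal.2 (Real.one_le_exp (by positivity))
  cases b with
  | top =>
    obtain rfl : a = ⊤ := by simpa using hba
    exact le_mul_of_one_le_left zero_le hC
  | coe p =>
    lift a to ℕ using ne_top_of_le_ne_top (ENat.natCast_ne_top (p + m)) hab
    have hdist : |(p : ℝ) - a| ≤ m := abs_sub_le_iff.2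
      ⟨sub_le_iff_le_add'.2 (by exact_mod_cast hba), sub_le_iff_le_add'.2 (by exact_mod_cast hab)⟩
    have hexp : l * (p - a) ≤ |l| * m := (le_abs_self _).trans <| by rw [abs_mul]; gcongr
    rw [expWeight_natCast, expWeight_natCast, ← ENNReal.ofReal_mul (Real.exp_pos _).le,
      ← Real.exp_add]
    gcongr
    linarith

end ExpWeight

section DimensionalEntropy

variable {X : Type*} {T T' : X → X} {U U' V : Finset (Set X)} {K : Set X} {l l' : ℝ} {m k k' : ℕ}

theorem mTU_le_mul {C : ℝ≥0∞} (hC₀ : C ≠ 0) (hC : C ≠ ⊤)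
    (href : ∀ E, Refines E (dynCov T U k) → Refines E (dynCov T' U' k'))
    (hweight : ∀ E, expWeight l' (nTU T' U' E) ≤ C * expWeight l (nTU T U E)) :
    mTU T' U' K l' k' ≤ C * mTU T U K l k := by
  simp only [mTU, ENNReal.mul_iInf_of_ne hC₀ hC, ← ENNReal.tsum_mul_left]
  exact le_iInf₂ fun 𝓔 ⟨h𝓔_countable, hK𝓔, h𝓔⟩ =>
    iInf₂_le_of_le 𝓔 ⟨h𝓔_countable, hK𝓔, fun E hE => href E (h𝓔 E hE)⟩
      (ENNReal.tsum_le_tsum fun E => hweight E)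

theorem mTUlim_eq_zero_iff : mTUlim T U K l = 0 ↔ ∀ k, mTU T U K l k = 0 := by
  simp only [mTUlim, ENNReal.iSup_eq_zero]

theorem mTUlim_eq_zero_of_expWeight_le_mul {C : ℝ≥0∞} (hC₀ : C ≠ 0) (hC : C ≠ ⊤)
    (href : ∀ k', ∃ k, ∀ E, Refines E (dynCov T U k) → Refines E (dynCov T' U' k'))
    (hweight : ∀ E, expWeight l' (nTU T' U' E) ≤ C * expWeight l (nTU T U E))
    (hzero : mTUlim T U K l = 0) : mTUlim T' U' K l' = 0 := by
  refine mTUlim_eq_zero_iff.2 fun k' => ?_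
  obtain ⟨k, hk⟩ := href k'
  refine le_zero_iff.1 ((mTU_le_mul hC₀ hC hk hweight).trans_eq ?_)
  rw [mTUlim_eq_zero_iff.1 hzero k, mul_zero]

theorem mTUlim_empty : mTUlim T U ∅ l = 0 :=
  mTUlim_eq_zero_iff.2 fun _ => le_zero_iff.1 <|
    iInf₂_le_of_le ∅ ⟨countable_empty, empty_subset _, fun _ hE => hE.elim⟩ tsum_empty.le

theorem one_le_mTU (hl : l ≤ 0) (hK : K.Nonempty) : 1 ≤ mTU T U K l k := by
  obtain ⟨x, hx⟩ := hK
  refine le_iInf₂ fun 𝓔 ⟨_, hK𝓔, _⟩ => ?_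
  obtain ⟨E, hE, -⟩ := hK𝓔 hx
  calc 1 ≤ expWeight l (nTU T U E) := one_le_expWeight hl _
    _ ≤ ∑' E : 𝓔, expWeight l (nTU T U (E : Set X)) :=
      ENNReal.le_tsum (f := fun E : 𝓔 => expWeight l (nTU T U (E : Set X))) ⟨E, hE⟩

theorem pos_of_mTUlim_eq_zero (hK : K.Nonempty) (hzero : mTUlim T U K l = 0) : 0 < l := by
  by_contra! hl
  have h_one : 1 ≤ mTU T U K l 0 := one_le_mTU hl hK
  rw [mTUlim_eq_zero_iff.1 hzero 0] at h_one
  exact h_one.not_gt one_pos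

theorem hBU_anti (hUV : ∀ A ∈ U, Refines A V) : hBU T V K ≤ hBU T U K := by
  refine le_iInf₂ fun l hl => iInf₂_le l ?_
  rcases K.eq_empty_or_nonempty with rfl | hK
  · exact mTUlim_empty
  · refine mTUlim_eq_zero_of_expWeight_le_mul one_ne_zero ENNReal.one_ne_top
      (fun k => ⟨k, fun _ => refines_dynCov_mono hUV⟩) (fun E => ?_) hl
    rw [one_mul]
    exact expWeight_anti (pos_of_mTUlim_eq_zero hK hl).le (nTU_mono hUV)

theorem mTUlim_iterate_eq_zero_iff (hm : 0 < m) :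
    mTUlim T^[m] (dynCov T U m) K (m * l) = 0 ↔ mTUlim T U K l = 0 := by
  have hC₀ : ENNReal.ofReal (Real.exp (|l| * m)) ≠ 0 := (ENNReal.ofReal_pos.2 (Real.exp_pos _)).ne'
  have h_le (E : Set X) : m * nTU T^[m] (dynCov T U m) E ≤ nTU T U E + m :=
    mul_nTU_iterate_le.trans le_self_add
  have h_ge (E : Set X) : nTU T U E ≤ m * nTU T^[m] (dynCov T U m) E + m :=
    nTU_le_mul_nTU_iterate_add hm
  constructor
  · refine mTUlim_eq_zero_of_expWeight_le_mul hC₀ ENNReal.ofReal_ne_top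
      (fun k => ⟨k, fun E hE => ?_⟩) fun E => ?_
    · exact refines_dynCov_of_le (Nat.le_mul_of_pos_left k hm) (refines_dynCov_iterate_iff.1 hE)
    · rw [expWeight_natCast_mul hm]
      exact expWeight_le_mul_of_le_add (h_ge E) (h_le E)
  · refine mTUlim_eq_zero_of_expWeight_le_mul hC₀ ENNReal.ofReal_ne_top
      (fun k => ⟨m * k, fun E hE => refines_dynCov_iterate_iff.2 hE⟩) fun E => ?_
    rw [expWeight_natCast_mul hm]
    exact expWeight_le_mul_of_le_add (h_le E) (h_ge E)

theorem hBU_iterate (T : X → X) (U : Finset (Set X)) (K : Set X) (hm : 0 < m) :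
    hBU T^[m] (dynCov T U m) K = m * hBU T U K := by
  have hm₀ : (m : ℝ) ≠ 0 := Nat.cast_ne_zero.2 hm.ne'
  have h_mul := galoisConnection_ereal_div_mul (Nat.cast_pos'.2 hm) (EReal.natCast_ne_top m)
  calc hBU T^[m] (dynCov T U m) K
      = ⨅ (l : ℝ) (_ : mTUlim T^[m] (dynCov T U m) K (m * l) = 0), ((m * l : ℝ) : EReal) :=
        ((Equiv.mulLeft₀ (m : ℝ) hm₀).iInf_comp (g := fun l =>
          ⨅ _ : mTUlim T^[m] (dynCov T U m) K l = 0, (l : EReal))).symm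
    _ = ⨅ (l : ℝ) (_ : mTUlim T U K l = 0), m * (l : EReal) := by
        simp only [mTUlim_iterate_eq_zero_iff hm, EReal.coe_mul, EReal.coe_natCast]
    _ = m * hBU T U K := h_mul.u_iInf₂.symm

theorem hB_iterate [TopologicalSpace X] (hT : Continuous T) (K : Set X) (hm : 0 < m) :
    hB T^[m] K = m * hB T K := by
  have h_mul := galoisConnection_ereal_mul_div (Nat.cast_pos'.2 hm) (EReal.natCast_ne_top m)
  apply le_antisymm
  · refine iSup₂_le fun U hU => ?_
    calc hBU T^[m] U K ≤ hBU T^[m] (dynCov T U m) K :=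
          hBU_anti fun _ hA => refines_of_mem_dynCov hm hA
      _ = m * hBU T U K := hBU_iterate T U K hm
      _ ≤ m * hB T K := h_mul.monotone_l (le_iSup₂_of_le U hU le_rfl)
  · calc m * hB T K
        = ⨆ (U : Finset (Set X)) (_ : (∀ A ∈ U, IsOpen A) ∧ ⋃₀ (↑U : Set (Set X)) = univ),
            m * hBU T U K := h_mul.l_iSup₂
      _ ≤ hB T^[m] K := iSup₂_le fun U ⟨hU_open, hU_cover⟩ => by
        rw [← hBU_iterate T U K hm]
        exact le_iSup₂_of_le (dynCov T U m)
          ⟨isOpen_of_mem_dynCov hT hU_open, sUnion_dynCov_eq_univ hU_cover⟩ le_rfl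

end DimensionalEntropy

theorem dimensional_entropy_power_general {X : Type*} [TopologicalSpace X] (T : X → X)
    (hT : Continuous T) (U : Finset (Set X)) (K : Set X) (m : ℕ) (hm : 0 < m) :
    hBU (T^[m]) (dynCov T U m) K = (m : EReal) * hBU T U K ∧
    hB (T^[m]) K = (m : EReal) * hB T K :=
  ⟨hBU_iterate T U K hm, hB_iterate hT K hm⟩

/-- Power rule for dimensional entropy:
`h^B_{U_0^{m-1}}(T^m,K) = m · h^B_U(T,K)`, and consequently `h^B(T^m,K) = m · h^B(T,K)`. -/
theorem dimensional_entropy_power {X : Type*} [MetricSpace X] [CompactSpace X]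
    [MeasurableSpace X] [BorelSpace X]
    (T : X → X) (hT : Continuous T) (U : Finset (Set X))
    (hUm : ∀ A ∈ U, MeasurableSet A) (hUc : ⋃₀ (↑U : Set (Set X)) = univ)
    (K : Set X) (m : ℕ) (hm : 0 < m) :
    hBU (T^[m]) (dynCov T U m) K = (m : EReal) * hBU T U K ∧
    hB (T^[m]) K = (m : EReal) * hB T K :=
  dimensional_entropy_power_general T hT U K m hm
end
end
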